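/- (Increasing averaging for PDA.) Fix q ≥ 0 and set w_t = t^q for t ≥ 1. Let τ, σ > 0 be such that for all x, x' ∈ dom g and y, y' ∈ dom h* one has (1/τ − L_f)·D_𝕏(x, x') + (1/σ)·D_𝕐(y, y') − ⟨K(x − x'), y − y'⟩ ≥ 0. Let (x⁰, y⁰) ∈ dom g × dom h* and for each t ≥ 0 let (x^{t+1}, y^{t+1}) = PD_{τ,σ}(x^t, y^t, 2x^{t+1} − x^t, y^t). Define A(x, y, x', y') = (1/τ)D_𝕏(x, x') + (1/σ)D_𝕐(y, y') − ⟨K(x − x'), y − y'⟩, and suppose Ω ∈ ℝ satisfies A(x, y, x', y') ≤ Ω for all x, x' ∈ dom g and y, y' ∈ dom h*. Set S_T = Σ_{t=1}^T w_t, x̄^T = (1/S_T) Σ_{t=1}^T w_t x^t and ȳ^T = (1/S_T) Σ_{t=1}^T w_t y^t. Then for every integer T ≥ 1 and every (x, y) ∈ dom g × dom h*: L(x̄^T, y) − L(x, ȳ^T) ≤ (q + 1)Ω / T. -/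

import Mathlib

/-!
Each half of a primal-dual step is a Bregman proximal step, so first-order optimality gives the
three-point inequality `φ z + c D(z, p) + c D(u, z) ≤ φ u + c D(u, p)`. Adding the two halves
produces bilinear terms in `K`; the extrapolation `2 x^{t+1} - x^t` is exactly what makes these
complete the divergences to the energy `A`, so that with `z = (x, y)`
`L(x^{t+1}, y) - L(x, y^{t+1}) ≤ A(z, z^t) - A(z, z^{t+1})`.
Since `0 ≤ A ≤ Ω`, summation by parts against nondecreasing weights `w` leaves at most `w_T Ω`, and
Jensen's inequality bounds the gap at the averages by `w_T Ω / S_T`. Finally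
`T^{q+1} / (q+1) = ∫₀ᵀ s^q ds ≤ S_T`.
-/

open Filter Topology

section Bregman

variable {E : Type*} [NormedAddCommGroup E] [NormedSpace ℝ E]

/-- The Bregman divergence `D_ψ(u, p)` of the kernel `ψ`. The map `ψ'` stands for the derivative of
`ψ`; it is a separate argument, so that differentiability is only assumed where it is needed. -/
def bregmanDiv (ψ : E → ℝ) (ψ' : E → E →L[ℝ] ℝ) (u p : E) : ℝ :=
  ψ u - ψ p - ψ' p (u - p)

/-- `z` is a Bregman proximal point of `p` for the objective `φ` on `C`: it minimizes
`φ + c D_ψ(·, p)` over `C`. The coefficient `c` is the inverse of the stepsize. -/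
def IsBregmanProx (ψ : E → ℝ) (ψ' : E → E →L[ℝ] ℝ) (C : Set E) (φ : E → ℝ) (c : ℝ) (p z : E) :
    Prop :=
  z ∈ C ∧ ∀ u ∈ C, φ z + c * bregmanDiv ψ ψ' z p ≤ φ u + c * bregmanDiv ψ ψ' u p

variable {ψ f : E → ℝ} {ψ' f' : E → E →L[ℝ] ℝ} {C : Set E} {φ : E → ℝ} {u p z : E}

lemma add_modulus_le_of_isMinOn_add {G : E → ℝ} {G' : E →L[ℝ] ℝ} {m : ℝ → ℝ}
    (hφ : UniformConvexOn C m φ) (hmin : IsMinOn (φ + G) C z) (hG : HasFDerivAt G G' z)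
    (hz : z ∈ C) (hu : u ∈ C) :
    φ z + m ‖u - z‖ ≤ φ u + G' (u - z) := by
  have slope_lim : Tendsto (fun s : ℝ => s⁻¹ • (G (z + s • (u - z)) - G z)) (𝓝[>] 0)
      (𝓝 (G' (u - z))) := by
    simpa only [zero_add, zero_smul, add_zero] using
      (hG.hasLineDerivAt (u - z)).tendsto_slope_zero_right
  have lower_lim : Tendsto (fun s : ℝ => φ z - φ u + (1 - s) * m ‖u - z‖) (𝓝[>] 0)
      (𝓝 (φ z - φ u + (1 - 0) * m ‖u - z‖)) :=
    (Continuous.tendsto (by fun_prop) 0).mono_left nhdsWithin_le_nhds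
  have lower_le_slope : ∀ᶠ s : ℝ in 𝓝[>] 0,
      φ z - φ u + (1 - s) * m ‖u - z‖ ≤ s⁻¹ • (G (z + s • (u - z)) - G z) := by
    filter_upwards [Ioc_mem_nhdsGT one_pos] with s ⟨hs0, hs1⟩
    have segment : s • u + (1 - s) • z = z + s • (u - z) := by module
    have mem := hφ.1 hu hz hs0.le (sub_nonneg.2 hs1) (by ring)
    have convexity := hφ.2 hu hz hs0.le (sub_nonneg.2 hs1) (by ring)
    have minimality := isMinOn_iff.1 hmin _ mem
    rw [segment] at convexity minimality
    simp only [Pi.add_apply, smul_eq_mul] at convexity minimality ⊢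
    rw [le_inv_mul_iff₀ hs0]
    linarith
  have := le_of_tendsto_of_tendsto lower_lim slope_lim lower_le_slope
  linarith

lemma modulus_le_bregmanDiv {m : ℝ → ℝ} (hψ : UniformConvexOn C m ψ)
    (hψ' : HasFDerivAt ψ (ψ' p) p) (hu : u ∈ C) (hp : p ∈ C) :
    m ‖u - p‖ ≤ bregmanDiv ψ ψ' u p := by
  -- Every point of `C` minimizes the constant function `ψ + (-ψ)`.
  have hmin : IsMinOn (ψ + -ψ) C p := isMinOn_iff.2 fun v _ => by simp
  have := add_modulus_le_of_isMinOn_add hψ hmin hψ'.neg hp hu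
  rw [neg_apply] at this
  rw [bregmanDiv]
  linarith

lemma bregmanDiv_nonneg (hψ : ConvexOn ℝ C ψ) (hψ' : HasFDerivAt ψ (ψ' p) p)
    (hu : u ∈ C) (hp : p ∈ C) : 0 ≤ bregmanDiv ψ ψ' u p :=
  modulus_le_bregmanDiv (uniformConvexOn_zero.2 hψ) hψ' hu hp

lemma abs_bregmanDiv_le_of_lipschitz {M : ℝ} (hC : Convex ℝ C)
    (hf' : ∀ x ∈ C, HasFDerivAt f (f' x) x) (hLip : ∀ x ∈ C, ‖f' x - f' p‖ ≤ M * ‖x - p‖)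
    (hu : u ∈ C) (hp : p ∈ C) :
    |bregmanDiv f f' u p| ≤ M / 2 * ‖u - p‖ ^ 2 := by
  set v := u - p with hv
  have mem : ∀ s ∈ Set.Icc (0 : ℝ) 1, p + s • v ∈ C := fun s hs => hC.add_smul_sub_mem hp hu hs
  have hderiv : ∀ s ∈ Set.Icc (0 : ℝ) 1,
      HasDerivAt (fun s : ℝ => f (p + s • v) - f p - s * f' p v) ((f' (p + s • v) - f' p) v) s := by
    intro s hs
    have hline : HasDerivAt (fun s : ℝ => p + s • v) v s := by
      simpa using ((hasDerivAt_id s).smul_const v).const_add p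
    exact ((((hf' _ (mem s hs)).comp_hasDerivAt s hline).sub_const (f p)).sub
      ((hasDerivAt_id s).mul_const (f' p v))).congr_deriv (by simp)
  have hbound : ∀ s : ℝ, HasDerivAt (fun s : ℝ => M / 2 * ‖v‖ ^ 2 * s ^ 2) (M * ‖v‖ ^ 2 * s) s :=
    fun s => ((hasDerivAt_pow 2 s).const_mul (M / 2 * ‖v‖ ^ 2)).congr_deriv (by simp; ring)
  have deriv_le : ∀ s ∈ Set.Ico (0 : ℝ) 1, ‖(f' (p + s • v) - f' p) v‖ ≤ M * ‖v‖ ^ 2 * s := by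
    intro s hs
    calc ‖(f' (p + s • v) - f' p) v‖
        ≤ ‖f' (p + s • v) - f' p‖ * ‖v‖ := ContinuousLinearMap.le_opNorm _ _
      _ ≤ M * ‖p + s • v - p‖ * ‖v‖ := by gcongr; exact hLip _ (mem s ⟨hs.1, hs.2.le⟩)
      _ = M * ‖v‖ ^ 2 * s := by
        rw [add_sub_cancel_left, norm_smul, Real.norm_of_nonneg hs.1]; ring
  have := image_norm_le_of_norm_deriv_right_le_deriv_boundary
    (fun s hs => (hderiv s hs).continuousAt.continuousWithinAt)
    (fun s hs => (hderiv s ⟨hs.1, hs.2.le⟩).hasDerivWithinAt) (by simp) hbound deriv_le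
    (Set.right_mem_Icc.2 zero_le_one)
  simpa [bregmanDiv, hv] using this

lemma mul_bregmanDiv_le_mul_bregmanDiv {M μ : ℝ} (hM : 0 ≤ M) (hμ : 0 ≤ μ)
    (hf' : ∀ x ∈ C, HasFDerivAt f (f' x) x) (hLip : ∀ x ∈ C, ‖f' x - f' p‖ ≤ M * ‖x - p‖)
    (hψ : StrongConvexOn C μ ψ) (hψ' : HasFDerivAt ψ (ψ' p) p) (hu : u ∈ C) (hp : p ∈ C) :
    μ * bregmanDiv f f' u p ≤ M * bregmanDiv ψ ψ' u p :=
  calc μ * bregmanDiv f f' u p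
      ≤ μ * (M / 2 * ‖u - p‖ ^ 2) := by
        gcongr; exact (le_abs_self _).trans (abs_bregmanDiv_le_of_lipschitz hψ.1 hf' hLip hu hp)
    _ = M * (μ / 2 * ‖u - p‖ ^ 2) := by ring
    _ ≤ M * bregmanDiv ψ ψ' u p := by gcongr; exact modulus_le_bregmanDiv hψ hψ' hu hp

lemma strongConvexOn_univ_of_forall_le {μ : ℝ}
    (h : ∀ (v v' : E) (l : ℝ), 0 ≤ l → l ≤ 1 →
      ψ (l • v + (1 - l) • v') ≤ l * ψ v + (1 - l) * ψ v' - μ / 2 * l * (1 - l) * ‖v - v'‖ ^ 2) :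
    StrongConvexOn Set.univ μ ψ := by
  refine ⟨convex_univ, fun v _ v' _ a b ha hb hab => ?_⟩
  obtain rfl : b = 1 - a := eq_sub_of_add_eq' hab
  simp only [smul_eq_mul]
  linarith [h v v' a ha (sub_nonneg.1 hb)]

lemma IsBregmanProx.three_point {c : ℝ} (hprox : IsBregmanProx ψ ψ' C φ c p z)
    (hφ : ConvexOn ℝ C φ) (hψ' : HasFDerivAt ψ (ψ' z) z) (hu : u ∈ C) :
    φ z + c * bregmanDiv ψ ψ' z p + c * bregmanDiv ψ ψ' u z ≤ φ u + c * bregmanDiv ψ ψ' u p := by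
  have hderiv : HasFDerivAt (fun v => c * bregmanDiv ψ ψ' v p) (c • (ψ' z - ψ' p)) z :=
    ((hψ'.sub_const (ψ p)).sub ((ψ' p).hasFDerivAt.comp z (hasFDerivAt_sub_const p))).const_mul c
  have := add_modulus_le_of_isMinOn_add (uniformConvexOn_zero.2 hφ) (isMinOn_iff.2 hprox.2) hderiv
    hprox.1 hu
  simp only [bregmanDiv, Pi.zero_apply, smul_apply, sub_apply, map_sub, smul_eq_mul] at this ⊢
  linarith

end Bregman

section Averaging

lemma sub_centerMass_le_centerMass_sub {ι E F : Type*} [AddCommGroup E] [Module ℝ E]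
    [AddCommGroup F] [Module ℝ F] {s : Set E} {t : Set F} {φ : E → ℝ} {χ : F → ℝ}
    (hφ : ConvexOn ℝ s φ) (hχ : ConcaveOn ℝ t χ) {I : Finset ι} {w : ι → ℝ} {x : ι → E} {y : ι → F}
    (hw : ∀ i ∈ I, 0 ≤ w i) (hw_pos : 0 < ∑ i ∈ I, w i)
    (hx : ∀ i ∈ I, x i ∈ s) (hy : ∀ i ∈ I, y i ∈ t) :
    φ (I.centerMass w x) - χ (I.centerMass w y) ≤ I.centerMass w fun i => φ (x i) - χ (y i) := by
  have hφ_le := hφ.map_centerMass_le hw hw_pos hx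
  have hχ_le := hχ.le_map_centerMass hw hw_pos hy
  calc φ (I.centerMass w x) - χ (I.centerMass w y)
      ≤ I.centerMass w (φ ∘ x) - I.centerMass w (χ ∘ y) := sub_le_sub hφ_le hχ_le
    _ = I.centerMass w fun i => φ (x i) - χ (y i) := by
      simp only [Finset.centerMass, Function.comp_apply, smul_sub, Finset.sum_sub_distrib]

lemma sum_Icc_mul_le_of_le_sub_succ {w a A : ℕ → ℝ} {Ω : ℝ} (hw : Monotone w) (hw0 : 0 ≤ w 0)
    (ha : ∀ t, a (t + 1) ≤ A t - A (t + 1)) (hA : ∀ t, A t ≤ Ω) (n : ℕ) :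
    ∑ t ∈ Finset.Icc 1 n, w t * a t ≤ w n * (Ω - A n) := by
  induction n with
  | zero => simpa using mul_nonneg hw0 (sub_nonneg.2 (hA 0))
  | succ n ih =>
    calc ∑ t ∈ Finset.Icc 1 (n + 1), w t * a t
        = ∑ t ∈ Finset.Icc 1 n, w t * a t + w (n + 1) * a (n + 1) :=
          Finset.sum_Icc_succ_top (Nat.le_add_left 1 n) _
      _ ≤ w n * (Ω - A n) + w (n + 1) * (A n - A (n + 1)) := by
          gcongr
          · exact hw0.trans (hw (Nat.zero_le _))
          · exact ha n
      _ ≤ w (n + 1) * (Ω - A n) + w (n + 1) * (A n - A (n + 1)) := by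
          gcongr
          · exact sub_nonneg.2 (hA n)
          · exact hw n.le_succ
      _ = w (n + 1) * (Ω - A (n + 1)) := by ring

lemma centerMass_Icc_le_of_le_sub_succ {w a A : ℕ → ℝ} {Ω : ℝ} (hw : Monotone w) (hw0 : 0 ≤ w 0)
    (ha : ∀ t, a (t + 1) ≤ A t - A (t + 1)) (hA0 : ∀ t, 0 ≤ A t) (hA : ∀ t, A t ≤ Ω) (n : ℕ) :
    (Finset.Icc 1 n).centerMass w a ≤ w n * Ω / ∑ t ∈ Finset.Icc 1 n, w t := by
  have hwn : ∀ t, 0 ≤ w t := fun t => hw0.trans (hw (Nat.zero_le t))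
  rw [Finset.centerMass, smul_eq_mul, inv_mul_eq_div]
  refine div_le_div_of_nonneg_right ?_ (Finset.sum_nonneg fun t _ => hwn t)
  calc ∑ t ∈ Finset.Icc 1 n, w t * a t
      ≤ w n * (Ω - A n) := sum_Icc_mul_le_of_le_sub_succ hw hw0 ha hA n
    _ ≤ w n * Ω := mul_le_mul_of_nonneg_left (sub_le_self Ω (hA0 n)) (hwn n)

lemma rpow_add_one_div_le_sum_Icc_rpow {q : ℝ} (hq : 0 ≤ q) (n : ℕ) :
    (n : ℝ) ^ (q + 1) / (q + 1) ≤ ∑ t ∈ Finset.Icc 1 n, (t : ℝ) ^ q := by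
  have hmono : MonotoneOn (fun s : ℝ => s ^ q) (Set.Icc 0 (0 + n)) :=
    fun _ hs _ _ hst => Real.rpow_le_rpow hs.1 hst hq
  calc (n : ℝ) ^ (q + 1) / (q + 1) = ∫ s in (0 : ℝ)..0 + n, s ^ q := by
        rw [integral_rpow (Or.inl (by linarith)), Real.zero_rpow (by positivity), zero_add,
          sub_zero]
    _ ≤ ∑ i ∈ Finset.range n, (0 + ((i + 1 : ℕ) : ℝ)) ^ q := hmono.integral_le_sum
    _ = ∑ t ∈ Finset.Icc 1 n, (t : ℝ) ^ q := by
        simp only [zero_add]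
        rw [Finset.range_eq_Ico, Finset.sum_Ico_add' (fun t : ℕ => (t : ℝ) ^ q), zero_add,
          Finset.Ico_add_one_right_eq_Icc]

lemma centerMass_Icc_rpow_le_of_le_sub_succ {q : ℝ} (hq : 0 ≤ q) {a A : ℕ → ℝ} {Ω : ℝ}
    (ha : ∀ t, a (t + 1) ≤ A t - A (t + 1)) (hA0 : ∀ t, 0 ≤ A t) (hA : ∀ t, A t ≤ Ω)
    {n : ℕ} (hn : 1 ≤ n) :
    (Finset.Icc 1 n).centerMass (fun t => (t : ℝ) ^ q) a ≤ (q + 1) * Ω / n := by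
  have hw : Monotone fun t : ℕ => (t : ℝ) ^ q := fun s t hst =>
    Real.rpow_le_rpow s.cast_nonneg (Nat.cast_le.2 hst) hq
  have hn0 : (0 : ℝ) < n := Nat.cast_pos.2 hn
  have hΩ0 : 0 ≤ Ω := (hA0 0).trans (hA 0)
  calc (Finset.Icc 1 n).centerMass (fun t => (t : ℝ) ^ q) a
      ≤ (n : ℝ) ^ q * Ω / ∑ t ∈ Finset.Icc 1 n, (t : ℝ) ^ q :=
        centerMass_Icc_le_of_le_sub_succ hw (by positivity) ha hA0 hA n
    _ ≤ (n : ℝ) ^ q * Ω / ((n : ℝ) ^ (q + 1) / (q + 1)) := by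
        gcongr
        exact rpow_add_one_div_le_sum_Icc_rpow hq n
    _ = (q + 1) * Ω / n := by
        rw [Real.rpow_add_one hn0.ne']
        field_simp

end Averaging

section PrimalDual

variable {X Y : Type*} [NormedAddCommGroup X] [NormedSpace ℝ X] [NormedAddCommGroup Y]
  [NormedSpace ℝ Y]

/-- The saddle function `L(x, y) = ⟨Kx, y⟩ + f(x) + g(x) - h*(y)`. -/
noncomputable def lagrangian (K : X →L[ℝ] Y →L[ℝ] ℝ) (f g : X → ℝ) (hstar : Y → ℝ) (x : X)
    (y : Y) : ℝ :=
  K x y + f x + g x - hstar y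

/-- The coupled divergence `α D_𝕏(x, x') + β D_𝕐(y, y') - ⟨K(x - x'), y - y'⟩` between `(x, y)` and
`(x', y')`, which measures the progress of the iteration. The inverse stepsizes `α = 1/τ` and
`β = 1/σ` are the parameters, so that the stepsize condition is nonnegativity at `α = 1/τ - L_f`. -/
noncomputable def pdaEnergy (K : X →L[ℝ] Y →L[ℝ] ℝ) (DX : X → X → ℝ) (DY : Y → Y → ℝ) (α β : ℝ)
    (x x' : X) (y y' : Y) : ℝ :=
  α * DX x x' + β * DY y y' - K (x - x') (y - y')

variable {K : X →L[ℝ] Y →L[ℝ] ℝ} {f g ψX : X → ℝ} {f' ψX' : X → X →L[ℝ] ℝ} {hstar ψY : Y → ℝ}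
  {ψY' : Y → Y →L[ℝ] ℝ} {domg : Set X} {domh : Set Y} {Lf α β : ℝ}

lemma convexOn_lagrangian_left (hf : ConvexOn ℝ domg f) (hg : ConvexOn ℝ domg g) (y : Y) :
    ConvexOn ℝ domg fun x => lagrangian K f g hstar x y :=
  ((((K.flip y).toLinearMap.convexOn hf.1).add hf).add hg).add_const (-hstar y)

lemma concaveOn_lagrangian_right (hh : ConvexOn ℝ domh hstar) (x : X) :
    ConcaveOn ℝ domh fun y => lagrangian K f g hstar x y :=
  ((((K x).toLinearMap.concaveOn hh.1).add_const (f x)).add_const (g x)).sub hh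

lemma pdaEnergy_nonneg {DX : X → X → ℝ} {DY : Y → Y → ℝ} {x x' : X} {y y' : Y}
    (hD : 0 ≤ Lf * DX x x') (hstep : 0 ≤ pdaEnergy K DX DY (α - Lf) β x x' y y') :
    0 ≤ pdaEnergy K DX DY α β x x' y y' := by
  simp only [pdaEnergy] at hstep ⊢
  linarith

lemma primal_step_le {x xbar xhat : X} {ytilde : Y} (hg : ConvexOn ℝ domg g)
    (hψX : HasFDerivAt ψX (ψX' xhat) xhat) (hx : x ∈ domg)
    (hf : 0 ≤ bregmanDiv f f' x xbar)
    (hsmooth : bregmanDiv f f' xhat xbar ≤ Lf * bregmanDiv ψX ψX' xhat xbar)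
    (hprox : IsBregmanProx ψX ψX' domg
      (fun u => f xbar + f' xbar (u - xbar) + g u + K u ytilde) α xbar xhat) :
    f xhat + g xhat + K xhat ytilde + α * bregmanDiv ψX ψX' x xhat +
        (α - Lf) * bregmanDiv ψX ψX' xhat xbar ≤
      f x + g x + K x ytilde + α * bregmanDiv ψX ψX' x xbar := by
  have model_convex : ConvexOn ℝ domg
      (fun u => f xbar + f' xbar (u - xbar) + g u + K u ytilde) := by
    refine (ConvexOn.add ?_ hg).add ((K.flip ytilde).toLinearMap.convexOn hg.1)
    exact (((f' xbar).toLinearMap.convexOn hg.1).add_const (f xbar - f' xbar xbar)).congr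
      fun u _ => by simp only [Pi.add_apply, ContinuousLinearMap.coe_coe, map_sub]; ring
  have := hprox.three_point model_convex hψX hx
  have hf_le : f xbar + f' xbar (x - xbar) ≤ f x := by rw [bregmanDiv] at hf; linarith
  have hf_descent : f xhat ≤ f xbar + f' xbar (xhat - xbar) +
      Lf * bregmanDiv ψX ψX' xhat xbar := by
    rw [bregmanDiv] at hsmooth; linarith
  linarith

lemma dual_step_le {xtilde : X} {y ybar yhat : Y} (hh : ConvexOn ℝ domh hstar)
    (hψY : HasFDerivAt ψY (ψY' yhat) yhat) (hy : y ∈ domh)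
    (hprox : IsBregmanProx ψY ψY' domh (fun v => hstar v - K xtilde v) β ybar yhat) :
    hstar yhat - K xtilde yhat + β * bregmanDiv ψY ψY' y yhat + β * bregmanDiv ψY ψY' yhat ybar ≤
      hstar y - K xtilde y + β * bregmanDiv ψY ψY' y ybar := by
  have := hprox.three_point (hh.sub ((K xtilde).toLinearMap.concaveOn hh.1)) hψY hy
  linarith

lemma lagrangian_sub_le_pdaEnergy_sub {x xbar xhat : X} {y ybar yhat : Y}
    (hg : ConvexOn ℝ domg g) (hh : ConvexOn ℝ domh hstar)
    (hψX : HasFDerivAt ψX (ψX' xhat) xhat) (hψY : HasFDerivAt ψY (ψY' yhat) yhat)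
    (hx : x ∈ domg) (hy : y ∈ domh)
    (hf : 0 ≤ bregmanDiv f f' x xbar)
    (hsmooth : bregmanDiv f f' xhat xbar ≤ Lf * bregmanDiv ψX ψX' xhat xbar)
    (hprimal : IsBregmanProx ψX ψX' domg
      (fun u => f xbar + f' xbar (u - xbar) + g u + K u ybar) α xbar xhat)
    (hdual : IsBregmanProx ψY ψY' domh (fun v => hstar v - K (2 • xhat - xbar) v) β ybar yhat) :
    lagrangian K f g hstar xhat y - lagrangian K f g hstar x yhat ≤
      pdaEnergy K (bregmanDiv ψX ψX') (bregmanDiv ψY ψY') α β x xbar y ybar -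
        pdaEnergy K (bregmanDiv ψX ψX') (bregmanDiv ψY ψY') α β x xhat y yhat -
        pdaEnergy K (bregmanDiv ψX ψX') (bregmanDiv ψY ψY') (α - Lf) β xhat xbar yhat ybar := by
  have hprimal_le := primal_step_le hg hψX hx hf hsmooth hprimal
  have hdual_le := dual_step_le hh hψY hy hdual
  have bilinear : K xhat y - K x yhat + K x ybar - K xhat ybar +
      K (2 • xhat - xbar) yhat - K (2 • xhat - xbar) y =
      K (x - xhat) (y - yhat) - K (x - xbar) (y - ybar) + K (xhat - xbar) (yhat - ybar) := by
    simp only [two_smul, map_sub, map_add, sub_apply, add_apply]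
    ring
  simp only [lagrangian, pdaEnergy]
  linarith

theorem stmt_1_general
    (hfconv : ConvexOn ℝ domg f) (hfderiv : ∀ x ∈ domg, HasFDerivAt f (f' x) x)
    (hfsmooth : ∀ x ∈ domg, ∀ x' ∈ domg,
      bregmanDiv f f' x x' ≤ Lf * bregmanDiv ψX ψX' x x')
    (hgconv : ConvexOn ℝ domg g) (hhconv : ConvexOn ℝ domh hstar)
    (hψX : ∀ x ∈ domg, HasFDerivAt ψX (ψX' x) x) (hψY : ∀ y ∈ domh, HasFDerivAt ψY (ψY' y) y)
    {q : ℝ} (hq : 0 ≤ q)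
    (hstep : ∀ x ∈ domg, ∀ x' ∈ domg, ∀ y ∈ domh, ∀ y' ∈ domh,
      0 ≤ pdaEnergy K (bregmanDiv ψX ψX') (bregmanDiv ψY ψY') (α - Lf) β x x' y y')
    {xs : ℕ → X} {ys : ℕ → Y} (hinit : xs 0 ∈ domg ∧ ys 0 ∈ domh)
    (hxs : ∀ t, IsBregmanProx ψX ψX' domg
      (fun u => f (xs t) + f' (xs t) (u - xs t) + g u + K u (ys t)) α (xs t) (xs (t + 1)))
    (hys : ∀ t, IsBregmanProx ψY ψY' domh
      (fun v => hstar v - K (2 • xs (t + 1) - xs t) v) β (ys t) (ys (t + 1)))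
    {Ω : ℝ}
    (hΩ : ∀ x ∈ domg, ∀ x' ∈ domg, ∀ y ∈ domh, ∀ y' ∈ domh,
      pdaEnergy K (bregmanDiv ψX ψX') (bregmanDiv ψY ψY') α β x x' y y' ≤ Ω)
    {T : ℕ} (hT : 1 ≤ T) {x : X} (hx : x ∈ domg) {y : Y} (hy : y ∈ domh) :
    lagrangian K f g hstar ((Finset.Icc 1 T).centerMass (fun t => (t : ℝ) ^ q) xs) y -
        lagrangian K f g hstar x ((Finset.Icc 1 T).centerMass (fun t => (t : ℝ) ^ q) ys) ≤
      (q + 1) * Ω / T := by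
  have hxm : ∀ t, xs t ∈ domg := Nat.rec hinit.1 fun t _ => (hxs t).1
  have hym : ∀ t, ys t ∈ domh := Nat.rec hinit.2 fun t _ => (hys t).1
  have hfdiv : ∀ u ∈ domg, ∀ p ∈ domg, 0 ≤ bregmanDiv f f' u p := fun u hu p hp =>
    bregmanDiv_nonneg hfconv (hfderiv p hp) hu hp
  set A : ℕ → ℝ := fun t =>
    pdaEnergy K (bregmanDiv ψX ψX') (bregmanDiv ψY ψY') α β x (xs t) y (ys t)
  have hA0 : ∀ t, 0 ≤ A t := fun t =>
    pdaEnergy_nonneg ((hfdiv x hx _ (hxm t)).trans (hfsmooth x hx _ (hxm t)))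
      (hstep x hx _ (hxm t) y hy _ (hym t))
  have hAΩ : ∀ t, A t ≤ Ω := fun t => hΩ x hx _ (hxm t) y hy _ (hym t)
  have hgap : ∀ t, lagrangian K f g hstar (xs (t + 1)) y - lagrangian K f g hstar x (ys (t + 1)) ≤
      A t - A (t + 1) := fun t =>
    (lagrangian_sub_le_pdaEnergy_sub hgconv hhconv (hψX _ (hxm _)) (hψY _ (hym _)) hx hy
      (hfdiv x hx _ (hxm t)) (hfsmooth _ (hxm _) _ (hxm _)) (hxs t) (hys t)).trans
      (sub_le_self _ (hstep _ (hxm _) _ (hxm _) _ (hym _) _ (hym _)))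
  have hw_pos : ∀ t ∈ Finset.Icc 1 T, 0 < (t : ℝ) ^ q := fun t ht =>
    Real.rpow_pos_of_pos (Nat.cast_pos.2 (Finset.mem_Icc.1 ht).1) q
  calc _ ≤ (Finset.Icc 1 T).centerMass (fun t => (t : ℝ) ^ q) fun t =>
        lagrangian K f g hstar (xs t) y - lagrangian K f g hstar x (ys t) :=
        sub_centerMass_le_centerMass_sub (convexOn_lagrangian_left hfconv hgconv y)
          (concaveOn_lagrangian_right hhconv x) (fun t ht => (hw_pos t ht).le)
          (Finset.sum_pos hw_pos (Finset.nonempty_Icc.2 hT)) (fun t _ => hxm t) fun t _ => hym t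
    _ ≤ (q + 1) * Ω / T := centerMass_Icc_rpow_le_of_le_sub_succ hq hgap hA0 hAΩ hT

end PrimalDual

/-- Increasing iterate averaging for the nonlinear primal-dual algorithm (PDA):
with weights `w_t = t^q`, the weighted averages of the PDA iterates satisfy a
`(q+1)Ω/T` bound on the pointwise saddle-point gap. -/
theorem stmt_1
    {X Y : Type*} [NormedAddCommGroup X] [NormedSpace ℝ X] [FiniteDimensional ℝ X]
    [NormedAddCommGroup Y] [NormedSpace ℝ Y] [FiniteDimensional ℝ Y]
    (K : X →L[ℝ] Y →L[ℝ] ℝ)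
    (Lf : ℝ) (hLf : 0 ≤ Lf)
    (f : X → ℝ) (f' : X → X →L[ℝ] ℝ)
    (hfconv : ConvexOn ℝ Set.univ f)
    (hfderiv : ∀ x, HasFDerivAt f (f' x) x)
    (hfLip : ∀ x x' : X, ‖f' x - f' x'‖ ≤ Lf * ‖x - x'‖)
    (domg : Set X) (hdomgne : domg.Nonempty) (hdomgconv : Convex ℝ domg)
    (g : X → ℝ) (hgconv : ConvexOn ℝ domg g) (hglsc : LowerSemicontinuousOn g domg)
    (domh : Set Y) (hdomhne : domh.Nonempty) (hdomhconv : Convex ℝ domh)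
    (hstar : Y → ℝ) (hhconv : ConvexOn ℝ domh hstar)
    (hhlsc : LowerSemicontinuousOn hstar domh)
    (ψX : X → ℝ) (ψX' : X → X →L[ℝ] ℝ) (hψXd : ∀ x, HasFDerivAt ψX (ψX' x) x)
    (hψXsc : ∀ (v v' : X) (l : ℝ), 0 ≤ l → l ≤ 1 →
      ψX (l • v + (1 - l) • v') ≤
        l * ψX v + (1 - l) * ψX v' - 1 / 2 * l * (1 - l) * ‖v - v'‖ ^ 2)
    (ψY : Y → ℝ) (ψY' : Y → Y →L[ℝ] ℝ) (hψYd : ∀ y, HasFDerivAt ψY (ψY' y) y)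
    (hψYsc : ∀ (v v' : Y) (l : ℝ), 0 ≤ l → l ≤ 1 →
      ψY (l • v + (1 - l) • v') ≤
        l * ψY v + (1 - l) * ψY v' - 1 / 2 * l * (1 - l) * ‖v - v'‖ ^ 2)
    (DX : X → X → ℝ) (hDX : ∀ x' x, DX x' x = ψX x' - ψX x - ψX' x (x' - x))
    (DY : Y → Y → ℝ) (hDY : ∀ y' y, DY y' y = ψY y' - ψY y - ψY' y (y' - y))
    (L : X → Y → ℝ) (hLdef : ∀ x y, L x y = K x y + f x + g x - hstar y)
    -- weight exponent
    (q : ℝ) (hq : 0 ≤ q)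
    -- stepsizes satisfying the stepsize condition
    (τ σ : ℝ) (hτ : 0 < τ) (hσ : 0 < σ)
    (hstep : ∀ x ∈ domg, ∀ x' ∈ domg, ∀ y ∈ domh, ∀ y' ∈ domh,
      0 ≤ (1 / τ - Lf) * DX x x' + 1 / σ * DY y y' - K (x - x') (y - y'))
    -- the PDA iterates: (x^{t+1}, y^{t+1}) = PD_{τ,σ}(x^t, y^t, 2x^{t+1} - x^t, y^t)
    (xs : ℕ → X) (ys : ℕ → Y)
    (hinit : xs 0 ∈ domg ∧ ys 0 ∈ domh)
    (hxs : ∀ t : ℕ, xs (t + 1) ∈ domg ∧ ∀ u ∈ domg,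
      f (xs t) + f' (xs t) (xs (t + 1) - xs t) + g (xs (t + 1)) + K (xs (t + 1)) (ys t) +
          1 / τ * DX (xs (t + 1)) (xs t) ≤
        f (xs t) + f' (xs t) (u - xs t) + g u + K u (ys t) + 1 / τ * DX u (xs t))
    (hys : ∀ t : ℕ, ys (t + 1) ∈ domh ∧ ∀ v ∈ domh,
      hstar (ys (t + 1)) - K (2 • xs (t + 1) - xs t) (ys (t + 1)) +
          1 / σ * DY (ys (t + 1)) (ys t) ≤
        hstar v - K (2 • xs (t + 1) - xs t) v + 1 / σ * DY v (ys t))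
    -- upper bound Ω on A(x, y, x', y') over the domains
    (Ω : ℝ)
    (hΩ : ∀ x ∈ domg, ∀ x' ∈ domg, ∀ y ∈ domh, ∀ y' ∈ domh,
      1 / τ * DX x x' + 1 / σ * DY y y' - K (x - x') (y - y') ≤ Ω) :
    ∀ T : ℕ, 1 ≤ T → ∀ x ∈ domg, ∀ y ∈ domh,
      L ((1 / ∑ t ∈ Finset.Icc 1 T, (t : ℝ) ^ q) •
            ∑ t ∈ Finset.Icc 1 T, ((t : ℝ) ^ q) • xs t) y -
          L x ((1 / ∑ t ∈ Finset.Icc 1 T, (t : ℝ) ^ q) •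
            ∑ t ∈ Finset.Icc 1 T, ((t : ℝ) ^ q) • ys t) ≤
        (q + 1) * Ω / (T : ℝ) := by
  obtain rfl : DX = bregmanDiv ψX ψX' := funext₂ hDX
  obtain rfl : DY = bregmanDiv ψY ψY' := funext₂ hDY
  obtain rfl : L = lagrangian K f g hstar := funext₂ hLdef
  have hfsmooth : ∀ x ∈ domg, ∀ x' ∈ domg,
      bregmanDiv f f' x x' ≤ Lf * bregmanDiv ψX ψX' x x' := fun x _ x' _ => by
    simpa only [one_mul] using mul_bregmanDiv_le_mul_bregmanDiv hLf zero_le_one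
      (fun u _ => hfderiv u) (fun u _ => hfLip u x') (strongConvexOn_univ_of_forall_le hψXsc)
      (hψXd x') (Set.mem_univ x) (Set.mem_univ x')
  intro T hT x hx y hy
  simpa only [Finset.centerMass, one_div] using
    stmt_1_general (hfconv.subset (Set.subset_univ _) hdomgconv) (fun u _ => hfderiv u) hfsmooth
      hgconv hhconv (fun u _ => hψXd u) (fun v _ => hψYd v) hq hstep hinit hxs hys hΩ hT hx hy
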